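/- (Witt cancellation, geometric form) Let F be a field of characteristic not equal to 2, let (V, q) be an n-dimensional non-degenerate quadratic space over F with n > 1, and let {e₁, …, eₙ} and {f₁, …, fₙ} be two orthogonal bases of (V, q). If q(e₁) = q(f₁), then the restriction of q to Span{e₂, …, eₙ} is isometric to the restriction of q to Span{f₂, …, fₙ}. -/

import Mathlib

namespace QuadraticMap

variable {F V : Type*} [Field F] [AddCommGroup V] [Module F V]

/-- The reflection in an anisotropic vector is an isometry. -/
theorem exists_isometryEquiv_reflection (Q : QuadraticForm F V) {u : V} (hu : Q u ≠ 0) :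
    ∃ τ : Q.IsometryEquiv Q, ∀ x, τ x = x - (polar Q u x / Q u) • u := by
  have h : ((Q u)⁻¹ • Q.polarBilin u) u = 2 := by
    simp [hu, mul_comm]
  refine ⟨⟨Module.reflection h, fun x => ?_⟩, fun x => ?_⟩
  · have key : ∀ c : F, Q (x - c • u) = Q x + c * c * Q u - c * polar Q u x := by
      intro c
      rw [sub_eq_add_neg, ← neg_smul, QuadraticMap.map_add Q, QuadraticMap.map_smul,
        polar_smul_right, polar_comm]
      simp only [smul_eq_mul]
      ring
    change Q (Module.reflection h x) = Q x
    rw [Module.reflection_apply, key]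
    simp only [LinearMap.smul_apply, polarBilin_apply_apply, smul_eq_mul]
    field_simp
    ring
  · change Module.reflection h x = _
    simp [Module.reflection_apply, div_eq_inv_mul]

/-- The isometry group acts transitively on the anisotropic vectors of a given length. -/
theorem exists_isometryEquiv_apply_eq (hF : (2 : F) ≠ 0) (Q : QuadraticForm F V) {x y : V}
    (hxy : Q x = Q y) (hx : Q x ≠ 0) : ∃ σ : Q.IsometryEquiv Q, σ x = y := by
  have hadd : Q (x + y) = 2 * Q x + polar Q x y := by
    rw [QuadraticMap.map_add Q, ← hxy]
    ring
  have hsub : Q (x - y) = 2 * Q x - polar Q x y := by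
    rw [sub_eq_add_neg, QuadraticMap.map_add Q, QuadraticMap.map_neg, polar_neg_right, ← hxy]
    ring
  by_cases hd : Q (x - y) = 0
  · have hs : Q (x + y) ≠ 0 := by
      have : Q (x + y) = 2 * 2 * Q x := by linear_combination hadd + hsub - hd
      rw [this]
      exact mul_ne_zero (mul_ne_zero hF hF) hx
    obtain ⟨τ, hτ⟩ := exists_isometryEquiv_reflection Q hs
    have hp : polar Q (x + y) x = Q (x + y) := by
      rw [polar_add_left, polar_self, polar_comm Q y x, hadd, two_nsmul, two_mul]
    let ν : Q.IsometryEquiv Q := ⟨LinearEquiv.neg F, fun v => Q.map_neg v⟩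
    refine ⟨τ.trans ν, ?_⟩
    change -(τ x) = y
    rw [hτ, hp, div_self hs]
    module
  · obtain ⟨τ, hτ⟩ := exists_isometryEquiv_reflection Q hd
    have hp : polar Q (x - y) x = Q (x - y) := by
      rw [polar_sub_left, polar_self, polar_comm Q y x, hsub, two_nsmul, two_mul]
    refine ⟨τ, ?_⟩
    rw [hτ, hp, div_self hd]
    module

section OrthogonalBasis

variable {ι : Type*} [Fintype ι] {Q : QuadraticForm F V} {b : Module.Basis ι F V}

theorem polar_basis_eq_repr_mul (hb : ∀ i j, i ≠ j → polar Q (b i) (b j) = 0) (i : ι) (v : V) :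
    polar Q (b i) v = b.repr v i * (2 * Q (b i)) := by
  conv_lhs => rw [← b.sum_repr v]
  rw [← polarBilin_apply_apply, map_sum, Finset.sum_eq_single i]
  · simp
  · intro j _ hj
    simp [hb i j hj.symm]
  · simp

theorem mem_span_basis_image_ne_iff (hF : (2 : F) ≠ 0)
    (hb : ∀ i j, i ≠ j → polar Q (b i) (b j) = 0) {i : ι} (hi : Q (b i) ≠ 0) (v : V) :
    v ∈ Submodule.span F (b '' {j | j ≠ i}) ↔ polar Q (b i) v = 0 := by
  rw [Module.Basis.mem_span_image, polar_basis_eq_repr_mul hb]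
  simp only [mul_eq_zero, hF, hi, or_false]
  constructor
  · intro h
    by_contra hne
    exact h (Finsupp.mem_support_iff.mpr hne) rfl
  · rintro h j hj rfl
    exact Finsupp.mem_support_iff.mp hj h

theorem apply_basis_ne_zero_of_nondegenerate (hQ : ∀ v, (∀ w, polar Q v w = 0) → v = 0)
    (hb : ∀ i j, i ≠ j → polar Q (b i) (b j) = 0) (i : ι) : Q (b i) ≠ 0 := by
  intro h
  refine b.ne_zero i (hQ _ fun w => ?_)
  rw [polar_basis_eq_repr_mul hb, h, mul_zero, mul_zero]

end OrthogonalBasis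

theorem IsometryEquiv.polar_apply {Q : QuadraticForm F V} (σ : Q.IsometryEquiv Q) (x y : V) :
    polar Q (σ x) (σ y) = polar Q x y := by
  simp only [polar, ← _root_.map_add, σ.map_app]

end QuadraticMap

/-- Witt cancellation, geometric form: if `{e i}` and `{f i}` are orthogonal bases of a
non-degenerate quadratic space `(V, q)` with `q (e 0) = q (f 0)`, then `q` restricted to
the span of `{e i : i ≠ 0}` is isometric to `q` restricted to the span of `{f i : i ≠ 0}`. -/
theorem witt_cancellation_geometric {F V : Type*} [Field F] [AddCommGroup V] [Module F V]
    [FiniteDimensional F V] (hF : (2 : F) ≠ 0)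
    {n : ℕ} (hn : 1 < n) (hdim : Module.finrank F V = n)
    (Q : QuadraticForm F V)
    (hQ : ∀ v : V, (∀ w : V, QuadraticMap.polar Q v w / 2 = 0) → v = 0)
    (e f : Module.Basis (Fin n) F V)
    (he : ∀ i j : Fin n, i ≠ j → QuadraticMap.polar Q (e i) (e j) / 2 = 0)
    (hf : ∀ i j : Fin n, i ≠ j → QuadraticMap.polar Q (f i) (f j) / 2 = 0)
    (h1 : Q (e ⟨0, by omega⟩) = Q (f ⟨0, by omega⟩)) :
    QuadraticMap.Equivalent
      (Q.comp (Submodule.span F (e '' {i : Fin n | i ≠ ⟨0, by omega⟩})).subtype)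
      (Q.comp (Submodule.span F (f '' {i : Fin n | i ≠ ⟨0, by omega⟩})).subtype) := by
  simp only [div_eq_zero_iff, hF, or_false] at hQ he hf
  have he0 := QuadraticMap.apply_basis_ne_zero_of_nondegenerate hQ he ⟨0, by omega⟩
  have hf0 := QuadraticMap.apply_basis_ne_zero_of_nondegenerate hQ hf ⟨0, by omega⟩
  obtain ⟨σ, hσ⟩ := QuadraticMap.exists_isometryEquiv_apply_eq hF Q h1 he0
  refine ⟨⟨σ.toLinearEquiv.ofSubmodules _ _ ?_, fun v => σ.map_app v⟩⟩
  ext v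
  obtain ⟨w, rfl⟩ := σ.toLinearEquiv.surjective v
  rw [Submodule.mem_map_equiv, LinearEquiv.symm_apply_apply,
    QuadraticMap.mem_span_basis_image_ne_iff hF he he0,
    QuadraticMap.mem_span_basis_image_ne_iff hF hf hf0, ← hσ, ← σ.polar_apply]
  rfl
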